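/- Fix c ≥ 0 and for 0 ≤ t < 1 define u_c(t,x) = v( (c+t)/(1−t), x/(1−t) ), where v(c',y) = √((x_+(c')−y)(y−x_−(c')))/(2πy)·χ_{(x_−(c'),x_+(c'))}(y) with x_±(c') = (√(c'+1) ± 1)². Then for every t ∈ [0,1) and every x with 2(2+c−t)x − (c+t)² − x² > 0, the Hilbert transform Hu_c(t,·)(x) exists and (1/π)·∂_x [ arctan( Hu_c(t,·)(x) / u_c(t,x) ) ] = (c+t+x) / ( 2πx·√( 2(2+c−t)x − (c+t)² − x² ) ). -/

import Mathlib

open MeasureTheory Real Filter Topology Set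

/-- Chebyshev polynomial of the first kind, `T_k`, evaluated at a real number. -/
noncomputable def chebT (k : ℕ) (x : ℝ) : ℝ := (Polynomial.Chebyshev.T ℝ k).eval x

/-- Chebyshev polynomial of the second kind, `U_k`, evaluated at a real number. -/
noncomputable def chebU (k : ℕ) (x : ℝ) : ℝ := (Polynomial.Chebyshev.U ℝ k).eval x

/-- `HasHilbertTransform f x L` means the Hilbert transform
`Hf(x) = (1/π) · p.v. ∫ f(y)/(x−y) dy` exists and equals `L`, the principal value
being the limit as `ε → 0⁺` of the integral over `{y : |x−y| > ε}`. -/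
def HasHilbertTransform (f : ℝ → ℝ) (x L : ℝ) : Prop :=
  Tendsto (fun ε : ℝ => (1 / π) * ∫ y in {y : ℝ | ε < |x - y|}, f y / (x - y))
    (𝓝[>] 0) (𝓝 L)

/-- Left edge `x_− = (√(c+1) − 1)²` of the Marchenko–Pastur distribution. -/
noncomputable def mpXm (c : ℝ) : ℝ := (Real.sqrt (c + 1) - 1) ^ 2

/-- Right edge `x_+ = (√(c+1) + 1)²` of the Marchenko–Pastur distribution. -/
noncomputable def mpXp (c : ℝ) : ℝ := (Real.sqrt (c + 1) + 1) ^ 2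

/-- Marchenko–Pastur density `v(c,y) = √((x_+−y)(y−x_−))/(2πy)` on `(x_−, x_+)`,
extended by `0` outside. -/
noncomputable def mpDensity (c : ℝ) (y : ℝ) : ℝ :=
  Set.indicator (Set.Ioo (mpXm c) (mpXp c))
    (fun z => Real.sqrt ((mpXp c - z) * (z - mpXm c)) / (2 * π * z)) y

/-!
A Hilbert transform on an interval is the boundary difference of a primitive `F` of
`y ↦ f y / (x - y)`, provided the singularity of `F` at `x` is symmetric. Take
`f y = √(q y) / y` with `q y = (b - y) * (y - a)`. Partial fractions of `q y / (y * (x - y))` split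
the integrand into multiples of `1`, `1 / y` and `1 / (x - y)` against the arcsine weight
`1 / √(q y)`, whose integrals are `π`, `π / √(a * b)` and, as a principal value, `0`. Hence the
Hilbert transform of the Marchenko–Pastur density divided by the density is `(y - |c|) / √(q y)`.
Since `q y + (y - |c|) ^ 2` is a multiple of `y`, the derivative of the arctangent of this ratio
simplifies; the general `t` is the case `t = 0` dilated by `1 - t`.
-/

section HilbertTransform

namespace HasHilbertTransform

variable {f : ℝ → ℝ} {x L : ℝ}

theorem const_mul (r : ℝ) (h : HasHilbertTransform f x L) :
    HasHilbertTransform (fun y ↦ r * f y) x (r * L) := by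
  refine (Tendsto.const_mul r h).congr fun ε ↦ ?_
  simp only [mul_div_assoc, integral_const_mul]
  ring

theorem comp_div {s : ℝ} (hs : 0 < s) (h : HasHilbertTransform f (x / s) L) :
    HasHilbertTransform (fun y ↦ f (y / s)) x L := by
  have hscale : Tendsto (fun ε : ℝ ↦ ε / s) (𝓝[>] 0) (𝓝[>] 0) := by
    refine tendsto_nhdsWithin_iff.2 ⟨?_, eventually_mem_nhdsWithin.mono fun ε hε ↦ div_pos hε hs⟩
    exact tendsto_nhdsWithin_of_tendsto_nhds (Continuous.tendsto' (by fun_prop) _ _ (zero_div s))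
  refine (Tendsto.comp h hscale).congr fun ε ↦ ?_
  have habs (y : ℝ) : |x - y| = |x / s - y / s| * s := by
    rw [← sub_div, abs_div, abs_of_pos hs, div_mul_cancel₀ _ hs.ne']
  have hmem (y : ℝ) : ε / s < |x / s - y / s| ↔ ε < |x - y| := by
    rw [div_lt_iff₀ hs, ← habs]
  have hmeas (u δ : ℝ) : MeasurableSet {y : ℝ | δ < |u - y|} :=
    measurableSet_lt measurable_const (by fun_prop)
  have hsubst := Measure.integral_comp_div
    ({y | ε / s < |x / s - y|}.indicator fun y ↦ f y / (x / s - y)) s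
  rw [integral_indicator (hmeas _ _), abs_of_pos hs, smul_eq_mul] at hsubst
  rw [Function.comp_apply, eq_div_of_mul_eq hs.ne' ((mul_comm _ _).trans hsubst.symm),
    ← integral_indicator (hmeas _ _), ← integral_div]
  congr 2 with y
  simp only [indicator, mem_ofPred_eq, hmem]
  split_ifs
  · rw [← sub_div, div_div, div_mul_cancel₀ _ hs.ne']
  · exact zero_div s

end HasHilbertTransform

theorem integrableOn_Ioo_and_integral_eq_sub_of_hasDerivAt_of_nonneg {F F' : ℝ → ℝ} {a b : ℝ}
    (hab : a ≤ b) (hcont : ContinuousOn F (Icc a b)) (hderiv : ∀ y ∈ Ioo a b, HasDerivAt F (F' y) y)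
    (hnonneg : ∀ y ∈ Ioo a b, 0 ≤ F' y) :
    IntegrableOn F' (Ioo a b) ∧ ∫ y in Ioo a b, F' y = F b - F a := by
  have hintegrable := intervalIntegral.integrableOn_deriv_of_nonneg hcont hderiv hnonneg
  refine ⟨hintegrable.mono_set Ioo_subset_Ioc_self, ?_⟩
  rw [← integral_Ioc_eq_integral_Ioo, ← intervalIntegral.integral_of_le hab]
  exact intervalIntegral.integral_eq_sub_of_hasDerivAt_of_le hab hcont hderiv
    ((intervalIntegrable_iff_integrableOn_Ioc_of_le hab).2 hintegrable)

theorem integrableOn_Ioo_and_integral_eq_sub_of_hasDerivAt_of_nonpos {F F' : ℝ → ℝ} {a b : ℝ}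
    (hab : a ≤ b) (hcont : ContinuousOn F (Icc a b)) (hderiv : ∀ y ∈ Ioo a b, HasDerivAt F (F' y) y)
    (hnonpos : ∀ y ∈ Ioo a b, F' y ≤ 0) :
    IntegrableOn F' (Ioo a b) ∧ ∫ y in Ioo a b, F' y = F b - F a := by
  obtain ⟨hintegrable, hval⟩ := integrableOn_Ioo_and_integral_eq_sub_of_hasDerivAt_of_nonneg hab
    hcont.neg (fun y hy ↦ (hderiv y hy).neg) fun y hy ↦ neg_nonneg.2 (hnonpos y hy)
  refine ⟨by simpa using hintegrable.neg, ?_⟩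
  rw [integral_neg] at hval
  simp only [Pi.neg_apply] at hval
  linarith

theorem setOf_lt_abs_sub_inter_Ioo {a b x ε : ℝ} (hx : x ∈ Ioo a b) (hε : 0 ≤ ε) :
    {y : ℝ | ε < |x - y|} ∩ Ioo a b = Ioo a (x - ε) ∪ Ioo (x + ε) b := by
  obtain ⟨hax, hxb⟩ := hx
  ext y
  simp only [mem_inter_iff, mem_ofPred_eq, mem_Ioo, mem_union, lt_abs]
  grind

theorem setIntegral_indicator_Ioo_div_sub {f F : ℝ → ℝ} {a b x ε : ℝ} (hε : 0 < ε) (ha : a < x - ε)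
    (hb : x + ε < b) (hf : ∀ y ∈ Ioo a b, 0 ≤ f y) (hcont : ContinuousOn F (Icc a b \ {x}))
    (hderiv : ∀ y ∈ Ioo a b \ {x}, HasDerivAt F (f y / (x - y)) y) :
    ∫ y in {y : ℝ | ε < |x - y|}, (Ioo a b).indicator f y / (x - y) =
      F (x - ε) - F a + (F b - F (x + ε)) := by
  obtain ⟨hintegrableL, hvalL⟩ := integrableOn_Ioo_and_integral_eq_sub_of_hasDerivAt_of_nonneg ha.le
    (hcont.mono fun y hy ↦ ⟨⟨hy.1, by linarith [hy.2]⟩, (by linarith [hy.2] : _ < x).ne⟩)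
    (fun y hy ↦ hderiv y ⟨⟨hy.1, by linarith [hy.2]⟩, (by linarith [hy.2] : _ < x).ne⟩)
    fun y hy ↦ div_nonneg (hf y ⟨hy.1, by linarith [hy.2]⟩) (by linarith [hy.2])
  obtain ⟨hintegrableR, hvalR⟩ := integrableOn_Ioo_and_integral_eq_sub_of_hasDerivAt_of_nonpos hb.le
    (hcont.mono fun y hy ↦ ⟨⟨by linarith [hy.1], hy.2⟩, (by linarith [hy.1] : x < _).ne'⟩)
    (fun y hy ↦ hderiv y ⟨⟨by linarith [hy.1], hy.2⟩, (by linarith [hy.1] : x < _).ne'⟩)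
    fun y hy ↦ div_nonpos_of_nonneg_of_nonpos (hf y ⟨by linarith [hy.1], hy.2⟩)
      (by linarith [hy.1])
  have hdisj : Disjoint (Ioo a (x - ε)) (Ioo (x + ε) b) :=
    Set.disjoint_left.2 fun y hy hy' ↦ by linarith [hy.2, hy'.1]
  have hindicator : (fun y ↦ (Ioo a b).indicator f y / (x - y)) =
      (Ioo a b).indicator fun y ↦ f y / (x - y) := by
    ext y
    by_cases hy : y ∈ Ioo a b <;> simp [hy]
  rw [hindicator, setIntegral_indicator measurableSet_Ioo,
    setOf_lt_abs_sub_inter_Ioo ⟨by linarith, by linarith⟩ hε.le,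
    setIntegral_union hdisj measurableSet_Ioo hintegrableL hintegrableR, hvalL, hvalR]

theorem hasHilbertTransform_indicator_Ioo_of_hasDerivAt {f F : ℝ → ℝ} {a b x d : ℝ}
    (hx : x ∈ Ioo a b) (hf : ∀ y ∈ Ioo a b, 0 ≤ f y) (hcont : ContinuousOn F (Icc a b \ {x}))
    (hderiv : ∀ y ∈ Ioo a b \ {x}, HasDerivAt F (f y / (x - y)) y)
    (hjump : Tendsto (fun ε ↦ F (x - ε) - F (x + ε)) (𝓝[>] 0) (𝓝 d)) :
    HasHilbertTransform ((Ioo a b).indicator f) x (1 / π * (F b - F a + d)) := by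
  refine ((hjump.const_add (F b - F a)).const_mul (1 / π)).congr' ?_
  have hsmall : ∀ᶠ ε : ℝ in 𝓝[>] 0, ε < min (x - a) (b - x) :=
    nhdsWithin_le_nhds (eventually_lt_nhds (lt_min (sub_pos.2 hx.1) (sub_pos.2 hx.2)))
  filter_upwards [hsmall, self_mem_nhdsWithin] with ε hε hε0
  obtain ⟨hεa, hεb⟩ := lt_min_iff.1 hε
  rw [setIntegral_indicator_Ioo_div_sub hε0 (by linarith) (by linarith) hf hcont hderiv]
  ring

end HilbertTransform

section Primitives

theorem tendsto_sub_sub_add_nhdsGT_zero {F : ℝ → ℝ} {x : ℝ} (hF : ContinuousAt F x) :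
    Tendsto (fun ε ↦ F (x - ε) - F (x + ε)) (𝓝[>] 0) (𝓝 0) := by
  have hcont : ContinuousAt (fun ε ↦ F (x - ε) - F (x + ε)) 0 := by
    refine ContinuousAt.sub ?_ ?_ <;> refine ContinuousAt.comp (by simpa using hF) (by fun_prop)
  simpa using hcont.tendsto.mono_left nhdsWithin_le_nhds

variable {a b x y : ℝ}

theorem hasDerivAt_sqrt_sub_mul_sub (hy : y ∈ Ioo a b) :
    HasDerivAt (fun z ↦ √((b - z) * (z - a))) ((a + b - 2 * y) / (2 * √((b - y) * (y - a)))) y := by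
  have hq := mul_pos (sub_pos.2 hy.2) (sub_pos.2 hy.1)
  convert (((hasDerivAt_id' y).const_sub b).fun_mul ((hasDerivAt_id' y).sub_const a)).sqrt hq.ne'
    using 2
  ring

/-- The primitive of the arcsine weight `1 / √((b - y) * (y - a))` on `(a, b)`. -/
noncomputable def arcsinePrimitive (a b y : ℝ) : ℝ := arcsin ((2 * y - (a + b)) / (b - a))

theorem continuous_arcsinePrimitive (a b : ℝ) : Continuous (arcsinePrimitive a b) := by
  unfold arcsinePrimitive
  fun_prop

theorem arcsinePrimitive_left (hab : a < b) : arcsinePrimitive a b a = -(π / 2) := by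
  rw [arcsinePrimitive, show 2 * a - (a + b) = -(b - a) by ring, neg_div,
    div_self (sub_pos.2 hab).ne', arcsin_neg, arcsin_one]

theorem arcsinePrimitive_right (hab : a < b) : arcsinePrimitive a b b = π / 2 := by
  rw [arcsinePrimitive, show 2 * b - (a + b) = b - a by ring, div_self (sub_pos.2 hab).ne',
    arcsin_one]

theorem hasDerivAt_arcsinePrimitive (hy : y ∈ Ioo a b) :
    HasDerivAt (arcsinePrimitive a b) (1 / √((b - y) * (y - a))) y := by
  have hab : 0 < b - a := by linarith [hy.1, hy.2]
  have hq : 0 < (b - y) * (y - a) := mul_pos (sub_pos.2 hy.2) (sub_pos.2 hy.1)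
  have hsq : 1 - ((2 * y - (a + b)) / (b - a)) ^ 2 = (b - y) * (y - a) * (2 / (b - a)) ^ 2 := by
    field_simp
    ring
  have hlt : ((2 * y - (a + b)) / (b - a)) ^ 2 < 1 := by
    rw [← sub_pos, hsq]
    positivity
  obtain ⟨hgt, hlt⟩ := abs_lt.1 ((sq_lt_one_iff_abs_lt_one _).1 hlt)
  have hlin := (((hasDerivAt_id' y).const_mul 2).sub_const (a + b)).div_const (b - a)
  refine ((hasDerivAt_arcsin hgt.ne' hlt.ne).comp y hlin).congr_deriv ?_
  rw [hsq, sqrt_mul hq.le, sqrt_sq (by positivity)]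
  field_simp

theorem hasDerivAt_arcsinePrimitive_inv (ha : 0 < a) (hy : y ∈ Ioo a b) :
    HasDerivAt (fun z ↦ arcsinePrimitive b⁻¹ a⁻¹ z⁻¹)
      (-(√(a * b) / (y * √((b - y) * (y - a))))) y := by
  have hy0 : 0 < y := ha.trans hy.1
  have hb : 0 < b := hy0.trans hy.2
  have hq : 0 < (b - y) * (y - a) := mul_pos (sub_pos.2 hy.2) (sub_pos.2 hy.1)
  have hinv : y⁻¹ ∈ Ioo b⁻¹ a⁻¹ := ⟨inv_strictAnti₀ hy0 hy.2, inv_strictAnti₀ ha hy.1⟩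
  refine ((hasDerivAt_arcsinePrimitive hinv).comp y (hasDerivAt_inv hy0.ne')).congr_deriv ?_
  have hweight : (a⁻¹ - y⁻¹) * (y⁻¹ - b⁻¹) = (b - y) * (y - a) / (a * b * y ^ 2) := by
    field_simp
  rw [hweight, sqrt_div hq.le, sqrt_mul (mul_pos ha hb).le, sqrt_sq hy0.le]
  field_simp

/-- The primitive in `y` of `√((b - x) * (x - a)) / ((x - y) * √((b - y) * (y - a)))`, the Cauchy
kernel against the normalized arcsine weight. Since `Real.log` is the logarithm of the absolute
value, the same formula serves on both sides of `x`. -/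
noncomputable def arcsineCauchyPrimitive (a b x y : ℝ) : ℝ :=
  log ((x - a) * (b - y) + (b - x) * (y - a) + 2 * √((b - x) * (x - a)) * √((b - y) * (y - a))) -
    log (x - y)

theorem arcsineCauchyPrimitive_numerator_pos (hx : x ∈ Ioo a b) (hy : y ∈ Icc a b) :
    0 < (x - a) * (b - y) + (b - x) * (y - a) +
      2 * √((b - x) * (x - a)) * √((b - y) * (y - a)) := by
  obtain ⟨hax, hxb⟩ := hx
  obtain ⟨hay, hyb⟩ := hy
  have hsum : 0 < (x - a) * (b - y) + (b - x) * (y - a) := by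
    rcases hay.eq_or_lt with rfl | hay
    · nlinarith
    · nlinarith [mul_pos (sub_pos.2 hxb) (sub_pos.2 hay)]
  positivity

theorem hasDerivAt_arcsineCauchyPrimitive (hx : x ∈ Ioo a b) (hy : y ∈ Ioo a b) (hxy : x ≠ y) :
    HasDerivAt (arcsineCauchyPrimitive a b x)
      (√((b - x) * (x - a)) / ((x - y) * √((b - y) * (y - a)))) y := by
  have hxy' : x - y ≠ 0 := sub_ne_zero.2 hxy
  have hqx : 0 < (b - x) * (x - a) := mul_pos (sub_pos.2 hx.2) (sub_pos.2 hx.1)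
  have hqy : 0 < (b - y) * (y - a) := mul_pos (sub_pos.2 hy.2) (sub_pos.2 hy.1)
  have hnum := arcsineCauchyPrimitive_numerator_pos hx (Ioo_subset_Icc_self hy)
  have hlin := (((hasDerivAt_id' y).const_sub b).const_mul (x - a)).fun_add
    (((hasDerivAt_id' y).sub_const a).const_mul (b - x))
  have hsqrt := (hasDerivAt_sqrt_sub_mul_sub hy).const_mul (2 * √((b - x) * (x - a)))
  refine (((hlin.fun_add hsqrt).log hnum.ne').sub
    (((hasDerivAt_id' y).const_sub x).log hxy')).congr_deriv ?_
  have hsx := sq_sqrt hqx.le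
  have hsy := sq_sqrt hqy.le
  have hsy0 := sqrt_pos.2 hqy
  generalize √((b - x) * (x - a)) = qx at *
  generalize √((b - y) * (y - a)) = qy at *
  field_simp
  linear_combination (2 * qx) * hsy - (2 * qy) * hsx

theorem continuousAt_log_arcsineCauchyPrimitive_numerator (hx : x ∈ Ioo a b) (hy : y ∈ Icc a b) :
    ContinuousAt (fun z ↦ log ((x - a) * (b - z) + (b - x) * (z - a) +
      2 * √((b - x) * (x - a)) * √((b - z) * (z - a)))) y :=
  ContinuousAt.log (by fun_prop) (arcsineCauchyPrimitive_numerator_pos hx hy).ne'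

theorem continuousOn_arcsineCauchyPrimitive (hx : x ∈ Ioo a b) :
    ContinuousOn (arcsineCauchyPrimitive a b x) (Icc a b \ {x}) := fun y hy ↦
  ((continuousAt_log_arcsineCauchyPrimitive_numerator hx hy.1).sub
    (ContinuousAt.log (by fun_prop) (sub_ne_zero.2 (Ne.symm hy.2)))).continuousWithinAt

theorem tendsto_arcsineCauchyPrimitive_sub_sub_add (hx : x ∈ Ioo a b) :
    Tendsto (fun ε ↦ arcsineCauchyPrimitive a b x (x - ε) - arcsineCauchyPrimitive a b x (x + ε))
      (𝓝[>] 0) (𝓝 0) := by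
  refine (tendsto_sub_sub_add_nhdsGT_zero (continuousAt_log_arcsineCauchyPrimitive_numerator hx
    (Ioo_subset_Icc_self hx))).congr fun ε ↦ ?_
  have hlog : log (x - (x - ε)) = log (x - (x + ε)) := by
    rw [sub_sub_cancel, sub_add_cancel_left, log_neg_eq_log]
  simp only [arcsineCauchyPrimitive, hlog, sub_sub_sub_cancel_right]

theorem arcsineCauchyPrimitive_left_eq_right (hx : x ∈ Ioo a b) :
    arcsineCauchyPrimitive a b x a = arcsineCauchyPrimitive a b x b := by
  obtain ⟨hax, hxb⟩ := hx
  have hab : b - a ≠ 0 := by linarith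
  simp only [arcsineCauchyPrimitive, sub_self, mul_zero, zero_mul, sqrt_zero, add_zero, zero_add]
  rw [log_mul (by linarith) hab, log_mul (by linarith) hab, ← neg_sub b x, log_neg_eq_log]
  ring

end Primitives

section MarchenkoPastur

variable {a b x y : ℝ}

/-- The primitive in `y` of `√((b - y) * (y - a)) / y / (x - y)`, assembled from its partial
fractions against the arcsine weight. -/
noncomputable def sqrtDivCauchyPrimitive (a b x y : ℝ) : ℝ :=
  arcsinePrimitive a b y + √(a * b) / x * arcsinePrimitive b⁻¹ a⁻¹ y⁻¹ +
    √((b - x) * (x - a)) / x * arcsineCauchyPrimitive a b x y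

theorem continuousAt_sqrt_mul_arcsinePrimitive_inv (hy : a ≤ y) (ha : 0 ≤ a) :
    ContinuousAt (fun z ↦ √(a * b) / x * arcsinePrimitive b⁻¹ a⁻¹ z⁻¹) y := by
  rcases ha.eq_or_lt with rfl | ha
  · simpa using continuousAt_const
  · exact continuousAt_const.mul ((continuous_arcsinePrimitive _ _).continuousAt.comp
      (continuousAt_inv₀ (ha.trans_le hy).ne'))

theorem hasDerivAt_sqrt_mul_arcsinePrimitive_inv (ha : 0 ≤ a) (hy : y ∈ Ioo a b) :
    HasDerivAt (fun z ↦ √(a * b) / x * arcsinePrimitive b⁻¹ a⁻¹ z⁻¹)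
      (-(a * b / (x * y * √((b - y) * (y - a))))) y := by
  rcases ha.eq_or_lt with rfl | ha
  · simpa using hasDerivAt_const y (0 : ℝ)
  · refine ((hasDerivAt_arcsinePrimitive_inv ha hy).const_mul _).congr_deriv ?_
    rw [← neg_mul_eq_mul_neg, div_mul_div_comm,
      mul_self_sqrt (mul_nonneg ha.le (ha.trans (hy.1.trans hy.2)).le), mul_assoc]

theorem hasDerivAt_sqrtDivCauchyPrimitive (ha : 0 ≤ a) (hx : x ∈ Ioo a b)
    (hy : y ∈ Ioo a b \ {x}) :
    HasDerivAt (sqrtDivCauchyPrimitive a b x) (√((b - y) * (y - a)) / y / (x - y)) y := by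
  obtain ⟨hy, hyx⟩ := hy
  have hxy : x - y ≠ 0 := sub_ne_zero.2 (Ne.symm hyx)
  have hx0 : 0 < x := ha.trans_lt hx.1
  have hy0 : 0 < y := ha.trans_lt hy.1
  have hqx : 0 < (b - x) * (x - a) := mul_pos (sub_pos.2 hx.2) (sub_pos.2 hx.1)
  have hqy : 0 < (b - y) * (y - a) := mul_pos (sub_pos.2 hy.2) (sub_pos.2 hy.1)
  refine (((hasDerivAt_arcsinePrimitive hy).fun_add
    (hasDerivAt_sqrt_mul_arcsinePrimitive_inv (x := x) ha hy)).fun_add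
    ((hasDerivAt_arcsineCauchyPrimitive hx hy (Ne.symm hyx)).const_mul
      (√((b - x) * (x - a)) / x))).congr_deriv ?_
  have hsx := sq_sqrt hqx.le
  have hsy := sq_sqrt hqy.le
  have hsy0 := sqrt_pos.2 hqy
  generalize √((b - x) * (x - a)) = qx at *
  generalize √((b - y) * (y - a)) = qy at *
  field_simp
  linear_combination y * hsx - x * hsy

theorem continuousOn_sqrtDivCauchyPrimitive (ha : 0 ≤ a) (hx : x ∈ Ioo a b) :
    ContinuousOn (sqrtDivCauchyPrimitive a b x) (Icc a b \ {x}) :=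
  ((continuous_arcsinePrimitive a b).continuousOn.add fun _ hy ↦
    (continuousAt_sqrt_mul_arcsinePrimitive_inv hy.1.1 ha).continuousWithinAt).add
    (continuousOn_const.mul (continuousOn_arcsineCauchyPrimitive hx))

theorem tendsto_sqrtDivCauchyPrimitive_sub_sub_add (ha : 0 ≤ a) (hx : x ∈ Ioo a b) :
    Tendsto (fun ε ↦ sqrtDivCauchyPrimitive a b x (x - ε) - sqrtDivCauchyPrimitive a b x (x + ε))
      (𝓝[>] 0) (𝓝 0) := by
  have hregular := tendsto_sub_sub_add_nhdsGT_zero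
    ((continuous_arcsinePrimitive a b).continuousAt.add
      (continuousAt_sqrt_mul_arcsinePrimitive_inv (b := b) (x := x) hx.1.le ha))
  have hsingular := (tendsto_arcsineCauchyPrimitive_sub_sub_add hx).const_mul
    (√((b - x) * (x - a)) / x)
  convert hregular.add hsingular using 2
  · simp only [sqrtDivCauchyPrimitive, Pi.add_apply]
    ring
  · simp

theorem sqrtDivCauchyPrimitive_right_sub_left (ha : 0 ≤ a) (hx : x ∈ Ioo a b) :
    sqrtDivCauchyPrimitive a b x b - sqrtDivCauchyPrimitive a b x a = π * (1 - √(a * b) / x) := by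
  have hab : a < b := hx.1.trans hx.2
  have hinv : √(a * b) / x * (arcsinePrimitive b⁻¹ a⁻¹ b⁻¹ - arcsinePrimitive b⁻¹ a⁻¹ a⁻¹) =
      -(π * (√(a * b) / x)) := by
    rcases ha.eq_or_lt with rfl | ha
    · simp
    · have hlt := inv_strictAnti₀ ha hab
      rw [arcsinePrimitive_left hlt, arcsinePrimitive_right hlt]
      ring
  simp only [sqrtDivCauchyPrimitive]
  rw [arcsinePrimitive_left hab, arcsinePrimitive_right hab,
    arcsineCauchyPrimitive_left_eq_right hx]
  linear_combination hinv

theorem hasHilbertTransform_sqrt_div (ha : 0 ≤ a) (hx : x ∈ Ioo a b) :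
    HasHilbertTransform ((Ioo a b).indicator fun y ↦ √((b - y) * (y - a)) / y) x
      (1 - √(a * b) / x) := by
  have htransform := hasHilbertTransform_indicator_Ioo_of_hasDerivAt
    (f := fun y ↦ √((b - y) * (y - a)) / y) hx
    (fun y hy ↦ div_nonneg (sqrt_nonneg _) (ha.trans hy.1.le))
    (continuousOn_sqrtDivCauchyPrimitive ha hx)
    (fun y hy ↦ hasDerivAt_sqrtDivCauchyPrimitive ha hx hy)
    (tendsto_sqrtDivCauchyPrimitive_sub_sub_add ha hx)
  rwa [sqrtDivCauchyPrimitive_right_sub_left ha hx, add_zero, one_div,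
    inv_mul_cancel_left₀ pi_ne_zero] at htransform

variable {c : ℝ}

theorem mpXm_mul_mpXp (hc : -1 ≤ c) : mpXm c * mpXp c = c ^ 2 := by
  have hsq : √(c + 1) ^ 2 = c + 1 := sq_sqrt (by linarith)
  rw [mpXm, mpXp, ← mul_pow]
  congr 1
  linear_combination hsq

theorem mpXp_sub_mul_sub_mpXm (hc : -1 ≤ c) (y : ℝ) :
    (mpXp c - y) * (y - mpXm c) = 2 * (2 + c) * y - c ^ 2 - y ^ 2 := by
  have hsq : √(c + 1) ^ 2 = c + 1 := sq_sqrt (by linarith)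
  have hsum : mpXm c + mpXp c = 2 * (2 + c) := by
    rw [mpXm, mpXp]
    linear_combination 2 * hsq
  linear_combination y * hsum - mpXm_mul_mpXp hc

theorem mpXm_le_mpXp (c : ℝ) : mpXm c ≤ mpXp c := by
  rw [mpXm, mpXp]
  nlinarith [sqrt_nonneg (c + 1)]

theorem neg_one_lt_of_mp_quadratic_pos (hy : 0 < 2 * (2 + c) * y - c ^ 2 - y ^ 2) : -1 < c := by
  nlinarith [sq_nonneg (y - (2 + c))]

theorem mem_Ioo_mpXm_mpXp_of_mp_quadratic_pos (hy : 0 < 2 * (2 + c) * y - c ^ 2 - y ^ 2) :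
    y ∈ Ioo (mpXm c) (mpXp c) := by
  rw [← mpXp_sub_mul_sub_mpXm (neg_one_lt_of_mp_quadratic_pos hy).le] at hy
  rcases pos_and_pos_or_neg_and_neg_of_mul_pos hy with ⟨hyp, hym⟩ | ⟨hyp, hym⟩
  · exact ⟨sub_pos.1 hym, sub_pos.1 hyp⟩
  · linarith [mpXm_le_mpXp c]

theorem mpDensity_of_mp_quadratic_pos (hy : 0 < 2 * (2 + c) * y - c ^ 2 - y ^ 2) :
    mpDensity c y = √(2 * (2 + c) * y - c ^ 2 - y ^ 2) / (2 * π * y) := by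
  rw [mpDensity, indicator_of_mem (mem_Ioo_mpXm_mpXp_of_mp_quadratic_pos hy),
    mpXp_sub_mul_sub_mpXm (neg_one_lt_of_mp_quadratic_pos hy).le]

theorem hasHilbertTransform_mpDensity (hy : 0 < 2 * (2 + c) * y - c ^ 2 - y ^ 2) :
    HasHilbertTransform (mpDensity c) y ((y - |c|) / (2 * π * y)) := by
  have hmem := mem_Ioo_mpXm_mpXp_of_mp_quadratic_pos hy
  have hm : 0 ≤ mpXm c := sq_nonneg _
  have hy0 : 0 < y := hm.trans_lt hmem.1
  convert (hasHilbertTransform_sqrt_div hm hmem).const_mul (1 / (2 * π)) using 1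
  · ext z
    rw [mpDensity, ← indicator_const_mul]
    congr 1 with w
    rw [div_mul_div_comm, one_mul]
  · rw [mpXm_mul_mpXp (neg_one_lt_of_mp_quadratic_pos hy).le, sqrt_sq_eq_abs]
    field_simp

theorem hasDerivAt_arctan_sub_div_sqrt {s k y : ℝ} (hy : 0 < s * y - k ^ 2 - y ^ 2) :
    HasDerivAt (fun z ↦ arctan ((z - k) / √(s * z - k ^ 2 - z ^ 2)))
      ((k + y) / (2 * y * √(s * y - k ^ 2 - y ^ 2))) y := by
  have hy0 : y ≠ 0 := by
    rintro rfl
    nlinarith [sq_nonneg k]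
  have hsk : (s - 2 * k) * y ≠ 0 := by nlinarith [sq_nonneg (y - k)]
  have hq : HasDerivAt (fun z ↦ s * z - k ^ 2 - z ^ 2) (s - 2 * y) y := by
    simpa using (((hasDerivAt_id' y).const_mul s).sub_const (k ^ 2)).fun_sub (hasDerivAt_pow 2 y)
  have hQ := sqrt_pos.2 hy
  refine ((((hasDerivAt_id' y).sub_const k).fun_div (hq.sqrt hy.ne') hQ.ne').arctan).congr_deriv ?_
  have hQsq := sq_sqrt hy.le
  generalize √(s * y - k ^ 2 - y ^ 2) = Q at *
  have hone : 1 + ((y - k) / Q) ^ 2 = (s - 2 * k) * y / Q ^ 2 := by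
    field_simp
    linear_combination hQsq
  rw [hone]
  have hs : s - 2 * k ≠ 0 := left_ne_zero_of_mul hsk
  field_simp
  linear_combination 2 * hQsq

theorem hasDerivAt_arctan_hilbert_div_mpDensity (hy : 0 < 2 * (2 + c) * y - c ^ 2 - y ^ 2) :
    HasDerivAt (fun z ↦ arctan ((z - |c|) / (2 * π * z) / mpDensity c z))
      ((|c| + y) / (2 * y * √(2 * (2 + c) * y - c ^ 2 - y ^ 2))) y := by
  have hderiv := hasDerivAt_arctan_sub_div_sqrt (s := 2 * (2 + c)) (k := |c|) (y := y)
    (by rwa [sq_abs])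
  simp only [sq_abs] at hderiv
  refine hderiv.congr_of_eventuallyEq ?_
  have hpos : ∀ᶠ z in 𝓝 y, 0 < 2 * (2 + c) * z - c ^ 2 - z ^ 2 :=
    continuousAt_const.eventually_lt (by fun_prop) hy
  filter_upwards [hpos] with z hz
  have hz0 : z ≠ 0 := by
    rintro rfl
    nlinarith [sq_nonneg c]
  rw [mpDensity_of_mp_quadratic_pos hz, div_div_div_cancel_right₀ (by positivity)]

theorem mp_quadratic_div {t : ℝ} (ht : t ≠ 1) (c y : ℝ) :
    2 * (2 + (c + t) / (1 - t)) * (y / (1 - t)) - ((c + t) / (1 - t)) ^ 2 - (y / (1 - t)) ^ 2 =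
      (2 * (2 + c - t) * y - (c + t) ^ 2 - y ^ 2) / (1 - t) ^ 2 := by
  have hs : 1 - t ≠ 0 := sub_ne_zero.2 ht.symm
  field_simp
  ring

theorem marchenko_pastur_flux_derivative_general {c t x : ℝ} (ht : t < 1)
    (hx : 0 < 2 * (2 + c - t) * x - (c + t) ^ 2 - x ^ 2) :
    ∃ Hu : ℝ → ℝ,
      (∀ y : ℝ, 0 < 2 * (2 + c - t) * y - (c + t) ^ 2 - y ^ 2 →
        HasHilbertTransform (fun z ↦ mpDensity ((c + t) / (1 - t)) (z / (1 - t))) y (Hu y)) ∧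
      HasDerivAt (fun y ↦ (1 / π) *
          arctan (Hu y / mpDensity ((c + t) / (1 - t)) (y / (1 - t))))
        ((|c + t| + x) / (2 * π * x * √(2 * (2 + c - t) * x - (c + t) ^ 2 - x ^ 2))) x := by
  have hs : 0 < 1 - t := sub_pos.2 ht
  have hpos (y : ℝ) (hy : 0 < 2 * (2 + c - t) * y - (c + t) ^ 2 - y ^ 2) :
      0 < 2 * (2 + (c + t) / (1 - t)) * (y / (1 - t)) - ((c + t) / (1 - t)) ^ 2 -
        (y / (1 - t)) ^ 2 := by
    rw [mp_quadratic_div ht.ne]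
    positivity
  refine ⟨fun y ↦ (y / (1 - t) - |(c + t) / (1 - t)|) / (2 * π * (y / (1 - t))),
    fun y hy ↦ (hasHilbertTransform_mpDensity (hpos y hy)).comp_div hs, ?_⟩
  refine (((hasDerivAt_arctan_hilbert_div_mpDensity (hpos x hx)).comp x
    ((hasDerivAt_id' x).div_const (1 - t))).const_mul (1 / π)).congr_deriv ?_
  rw [mp_quadratic_div ht.ne, sqrt_div hx.le, sqrt_sq hs.le, abs_div, abs_of_pos hs]
  field_simp

end MarchenkoPastur

/-- For the Marchenko–Pastur family `u_c(t,x) = v((c+t)/(1−t), x/(1−t))`, at every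
`t ∈ [0,1)` and every `x` with `2(2+c−t)x − (c+t)² − x² > 0`, the Hilbert transform
`Hu_c(t,·)` exists on the support and
`(1/π)·∂_x[arctan(Hu_c(t,·)/u_c(t,·))](x) = (c+t+x)/(2πx·√(2(2+c−t)x − (c+t)² − x²))`. -/
theorem marchenko_pastur_flux_derivative (c : ℝ) (hc : 0 ≤ c)
    (t : ℝ) (ht : t ∈ Set.Ico (0 : ℝ) 1) (x : ℝ)
    (hx : 0 < 2 * (2 + c - t) * x - (c + t) ^ 2 - x ^ 2) :
    ∃ Hu : ℝ → ℝ,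
      (∀ y : ℝ, 0 < 2 * (2 + c - t) * y - (c + t) ^ 2 - y ^ 2 →
        HasHilbertTransform (fun z => mpDensity ((c + t) / (1 - t)) (z / (1 - t))) y (Hu y)) ∧
      HasDerivAt (fun y => (1 / π) *
          Real.arctan (Hu y / mpDensity ((c + t) / (1 - t)) (y / (1 - t))))
        ((c + t + x) /
          (2 * π * x * Real.sqrt (2 * (2 + c - t) * x - (c + t) ^ 2 - x ^ 2))) x := by
  simpa only [abs_of_nonneg (add_nonneg hc ht.1)] using
    marchenko_pastur_flux_derivative_general ht.2 hx
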